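/- arXiv:1111.2138 — 3 statements merged into one kernel-verified Lean document; each statement's English description precedes it below -/
import Mathlib

section
/- Let T be a nonnegative tensor of order m ≥ 2 and dimension n ≥ 2. Then there exists a partition {I_1,…,I_k} of {1,…,n} into pairwise disjoint nonempty sets whose union is {1,…,n} such that every induced tensor T_{I_j} is weakly irreducible and ρ(T) = max_{j=1,…,k} ρ(T_{I_j}); in particular, if T is weakly reducible, then ρ(T) = ρ(T_{I_p}) for some block I_p of such a partition. -/
open Finset

/-- `(T x^{m-1})_i` for an order-`(k+1)` tensor encoded by its first index
and the `k` trailing indices (so for an order-`m` tensor, `k = m - 1`). -/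
def tapp {ι : Type*} [Fintype ι] {k : ℕ} (T : ι → (Fin k → ι) → ℝ) (x : ι → ℝ) (i : ι) : ℝ :=
  ∑ β : Fin k → ι, T i β * ∏ l, x (β l)

/-- All entries of the tensor are nonnegative. -/
def TNonneg {ι : Type*} {k : ℕ} (T : ι → (Fin k → ι) → ℝ) : Prop :=
  ∀ i β, 0 ≤ T i β

/-- `T` is strictly nonnegative: nonnegative, and `T x^{m-1} > 0` whenever `x > 0`. -/
def TStrictlyNonneg {ι : Type*} [Fintype ι] {k : ℕ} (T : ι → (Fin k → ι) → ℝ) : Prop :=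
  TNonneg T ∧ ∀ x : ι → ℝ, (∀ i, 0 < x i) → ∀ i, 0 < tapp T x i

/-- Representation matrix `G(T)`: `G(T)_{ij}` is the sum of all `T_{i i₂…i_m}` with
`j ∈ {i₂,…,i_m}`. -/
def repMat {ι : Type*} [Fintype ι] [DecidableEq ι] {k : ℕ}
    (T : ι → (Fin k → ι) → ℝ) : Matrix ι ι ℝ :=
  fun i j => ∑ β : Fin k → ι, if ∃ l, β l = j then T i β else 0

/-- Majorization matrix `M(T)`: `M(T)_{ij} = T_{i j j … j}`. -/
def majMat {ι : Type*} {k : ℕ} (T : ι → (Fin k → ι) → ℝ) : Matrix ι ι ℝ :=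
  fun i j => T i (fun _ => j)

/-- A square matrix is reducible if some nonempty proper index subset `I` satisfies
`A i j = 0` for all `i ∈ I`, `j ∉ I`. -/
def MatReducible {ι : Type*} [Fintype ι] (A : Matrix ι ι ℝ) : Prop :=
  ∃ I : Finset ι, I.Nonempty ∧ I ≠ Finset.univ ∧ ∀ i ∈ I, ∀ j ∉ I, A i j = 0

def MatIrreducible {ι : Type*} [Fintype ι] (A : Matrix ι ι ℝ) : Prop :=
  ¬ MatReducible A

/-- A square nonnegative matrix is primitive if some positive power is entrywise positive. -/
def MatPrimitive {ι : Type*} [Fintype ι] [DecidableEq ι] (A : Matrix ι ι ℝ) : Prop :=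
  ∃ p : ℕ, 0 < p ∧ ∀ i j, 0 < (A ^ p) i j

/-- `lam ∈ ℂ` is an eigenvalue of `T`:
`(T x^{m-1})_i = lam * x_i^{m-1}` for some nonzero `x ∈ ℂⁿ`. -/
def TIsEig {ι : Type*} [Fintype ι] {k : ℕ} (T : ι → (Fin k → ι) → ℝ) (lam : ℂ) : Prop :=
  ∃ x : ι → ℂ, x ≠ 0 ∧
    ∀ i, (∑ β : Fin k → ι, (T i β : ℂ) * ∏ l, x (β l)) = lam * x i ^ k

/-- Spectral radius: the supremum of moduli of eigenvalues. -/
noncomputable def specRad {ι : Type*} [Fintype ι] {k : ℕ}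
    (T : ι → (Fin k → ι) → ℝ) : ℝ :=
  sSup {r : ℝ | ∃ lam : ℂ, TIsEig T lam ∧ r = ‖lam‖}

/-- Induced tensor `T_I` on a subset `I` of the index set. -/
def inducedT {ι : Type*} {k : ℕ} (T : ι → (Fin k → ι) → ℝ) (I : Finset ι) :
    {i // i ∈ I} → (Fin k → {i // i ∈ I}) → ℝ :=
  fun i β => T i.val (fun l => (β l).val)

/-- The identity tensor: `E_{i₁…i_m} = 1` if all indices coincide, `0` otherwise. -/
def idT (ι : Type*) [DecidableEq ι] (k : ℕ) : ι → (Fin k → ι) → ℝ :=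
  fun i β => if ∀ l, β l = i then 1 else 0

/-- A tensor is reducible if some nonempty proper index subset `I` satisfies
`T_{i₁ i₂ … i_m} = 0` for all `i₁ ∈ I` and `i₂, …, i_m ∉ I`. -/
def TReducible {ι : Type*} [Fintype ι] {k : ℕ} (T : ι → (Fin k → ι) → ℝ) : Prop :=
  ∃ I : Finset ι, I.Nonempty ∧ I ≠ Finset.univ ∧
    ∀ i ∈ I, ∀ β : Fin k → ι, (∀ l, β l ∉ I) → T i β = 0

/-- The map `F_T(x)_i = ((T x^{m-1})_i)^{1/(m-1)}` (here `k = m - 1`). -/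
noncomputable def FT {ι : Type*} [Fintype ι] {k : ℕ}
    (T : ι → (Fin k → ι) → ℝ) (x : ι → ℝ) : ι → ℝ :=
  fun i => (tapp T x i) ^ ((k : ℝ)⁻¹)

/-- A tensor is primitive if some iterate of `F_T` is entrywise positive on every
nonzero nonnegative vector. -/
def TPrimitive {ι : Type*} [Fintype ι] {k : ℕ} (T : ι → (Fin k → ι) → ℝ) : Prop :=
  ∃ p : ℕ, 0 < p ∧ ∀ x : ι → ℝ, (∀ i, 0 ≤ x i) → x ≠ 0 → ∀ i, 0 < (FT T)^[p] x i

/-- `T` is weakly positive: all off-diagonal entries of `M(T)` are positive. -/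
def TWeaklyPositive {ι : Type*} {k : ℕ} (T : ι → (Fin k → ι) → ℝ) : Prop :=
  ∀ i j, i ≠ j → 0 < T i (fun _ => j)

/-- `T` is essentially positive: `T x^{m-1} > 0` for every nonzero `x ≥ 0`. -/
def TEssentiallyPositive {ι : Type*} [Fintype ι] {k : ℕ} (T : ι → (Fin k → ι) → ℝ) : Prop :=
  ∀ x : ι → ℝ, (∀ i, 0 ≤ x i) → x ≠ 0 → ∀ i, 0 < tapp T x i

/-- Hilbert's projective metric between two positive vectors:
`d(u,v) = log (max_i v_i/u_i) - log (min_i v_i/u_i)`. -/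
noncomputable def hilbertD {n : ℕ} (hn : 0 < n) (u v : Fin n → ℝ) : ℝ :=
  Real.log ((Finset.univ : Finset (Fin n)).sup' ⟨⟨0, hn⟩, Finset.mem_univ _⟩
      (fun i => v i / u i)) -
  Real.log ((Finset.univ : Finset (Fin n)).inf' ⟨⟨0, hn⟩, Finset.mem_univ _⟩
      (fun i => v i / u i))

namespace SpecAux

/-- A nonnegative function bounded by `M` has products bounded by powers of `M`. -/
lemma prod_le_pow' {ι : Type*} {k : ℕ} (x : ι → ℝ) (hx : ∀ i, 0 ≤ x i) (M : ℝ)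
    (hM : ∀ i, x i ≤ M) (β : Fin k → ι) : ∏ l, x (β l) ≤ M ^ k := by
  calc ∏ l, x (β l) ≤ ∏ _l : Fin k, M :=
        Finset.prod_le_prod (fun _ _ => hx _) (fun _ _ => hM _)
    _ = M ^ k := by simp

/-- Bound on sub-eigenvalues by the total sum of the entries. -/
lemma sub_bound {ι : Type*} [Fintype ι] {k : ℕ} (T : ι → (Fin k → ι) → ℝ) (hT : TNonneg T)
    (x : ι → ℝ) (hx : ∀ i, 0 ≤ x i) (hx0 : x ≠ 0) (r : ℝ)
    (h : ∀ i, r * x i ^ k ≤ tapp T x i) : r ≤ ∑ i, ∑ β, T i β := by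
  obtain ⟨j, hj⟩ := Function.ne_iff.mp hx0
  obtain ⟨i, -, hi⟩ := Finset.exists_max_image Finset.univ x ⟨j, Finset.mem_univ _⟩
  have hpos : 0 < x i := lt_of_lt_of_le (lt_of_le_of_ne (hx j) (Ne.symm hj)) (hi j (Finset.mem_univ _))
  have h1 : tapp T x i ≤ (∑ β, T i β) * x i ^ k := by
    unfold tapp
    rw [Finset.sum_mul]
    exact Finset.sum_le_sum fun β _ => mul_le_mul_of_nonneg_left
      (prod_le_pow' x hx _ (fun a => hi a (Finset.mem_univ _)) β) (hT i β)
  have h2 : r ≤ ∑ β, T i β := le_of_mul_le_mul_right ((h i).trans h1) (pow_pos hpos k)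
  exact h2.trans (Finset.single_le_sum (f := fun i => ∑ β, T i β)
    (fun a _ => Finset.sum_nonneg fun β _ => hT a β) (Finset.mem_univ i))

/-- The modulus of a complex eigenvector is a sub-eigenvector. -/
lemma eig_sub {ι : Type*} [Fintype ι] {k : ℕ} (T : ι → (Fin k → ι) → ℝ) (hT : TNonneg T)
    (x : ι → ℂ) (lam : ℂ) (i : ι)
    (h : (∑ β : Fin k → ι, (T i β : ℂ) * ∏ l, x (β l)) = lam * x i ^ k) :
    ‖lam‖ * ‖x i‖ ^ k ≤ tapp T (fun j => ‖x j‖) i := by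
  rw [← norm_pow, ← norm_mul, ← h]
  refine (norm_sum_le _ _).trans (le_of_eq ?_)
  unfold tapp
  refine Finset.sum_congr rfl fun β _ => ?_
  rw [norm_mul, norm_prod, Complex.norm_real, Real.norm_of_nonneg (hT i β)]

lemma eig_bdd {ι : Type*} [Fintype ι] {k : ℕ} (T : ι → (Fin k → ι) → ℝ) (hT : TNonneg T) :
    BddAbove {r : ℝ | ∃ lam : ℂ, TIsEig T lam ∧ r = ‖lam‖} := by
  refine ⟨∑ i, ∑ β, T i β, ?_⟩
  rintro r ⟨lam, ⟨x, hx0, hx⟩, rfl⟩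
  refine sub_bound T hT (fun j => ‖x j‖) (fun _ => norm_nonneg _) ?_ _
    (fun i => eig_sub T hT x lam i (hx i))
  intro h
  apply hx0
  funext i
  simpa using congrFun h i

lemma le_specRad {ι : Type*} [Fintype ι] {k : ℕ} (T : ι → (Fin k → ι) → ℝ) (hT : TNonneg T)
    (lam : ℂ) (h : TIsEig T lam) : ‖lam‖ ≤ specRad T :=
  le_csSup (eig_bdd T hT) ⟨lam, h, rfl⟩

lemma specRad_nonneg {ι : Type*} [Fintype ι] {k : ℕ} (T : ι → (Fin k → ι) → ℝ) :
    0 ≤ specRad T := by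
  apply Real.sSup_nonneg
  rintro r ⟨lam, -, rfl⟩
  exact norm_nonneg _

lemma tapp_smul {ι : Type*} [Fintype ι] {k : ℕ} (T : ι → (Fin k → ι) → ℝ) (c : ℝ) (x : ι → ℝ)
    (i : ι) : tapp T (c • x) i = c ^ k * tapp T x i := by
  unfold tapp
  rw [Finset.mul_sum]
  refine Finset.sum_congr rfl fun β _ => ?_
  simp only [Pi.smul_apply, smul_eq_mul, Finset.prod_mul_distrib, Finset.prod_const,
    Finset.card_univ, Fintype.card_fin]
  ring

lemma tapp_cont {ι : Type*} [Fintype ι] {k : ℕ} (T : ι → (Fin k → ι) → ℝ) (i : ι) :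
    Continuous (fun x => tapp T x i) := by
  unfold tapp
  fun_prop

lemma exists_simplex {ι : Type*} [Fintype ι] {k : ℕ} (T : ι → (Fin k → ι) → ℝ)
    (x : ι → ℝ) (hx : ∀ i, 0 ≤ x i) (hx0 : x ≠ 0) (r : ℝ)
    (h : ∀ i, r * x i ^ k ≤ tapp T x i) :
    ∃ z ∈ stdSimplex ℝ ι, ∀ i, r * z i ^ k ≤ tapp T z i := by
  obtain ⟨j, hj⟩ := Function.ne_iff.mp hx0
  have hs : 0 < ∑ i, x i :=
    Finset.sum_pos' (fun i _ => hx i) ⟨j, Finset.mem_univ _, lt_of_le_of_ne (hx j) (Ne.symm hj)⟩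
  refine ⟨(∑ i, x i)⁻¹ • x, ⟨fun i => ?_, ?_⟩, fun i => ?_⟩
  · exact mul_nonneg (inv_nonneg.mpr hs.le) (hx i)
  · simp only [Pi.smul_apply, smul_eq_mul, ← Finset.mul_sum]
    exact inv_mul_cancel₀ hs.ne'
  · rw [tapp_smul]
    simp only [Pi.smul_apply, smul_eq_mul, mul_pow]
    calc r * ((∑ i, x i)⁻¹ ^ k * x i ^ k) = (∑ i, x i)⁻¹ ^ k * (r * x i ^ k) := by ring
      _ ≤ _ := mul_le_mul_of_nonneg_left (h i) (pow_nonneg (inv_nonneg.mpr hs.le) _)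

lemma simplex_ne {ι : Type*} [Fintype ι] (z : ι → ℝ) (hz : z ∈ stdSimplex ℝ ι) : z ≠ 0 := by
  rintro rfl
  have := hz.2
  simp at this

/-- Perron-Frobenius for entrywise positive tensors. -/
lemma pf_pos {ι : Type*} [Fintype ι] {k : ℕ} (hk : 0 < k) (T : ι → (Fin k → ι) → ℝ)
    (hT : ∀ i β, 0 < T i β)
    (x : ι → ℝ) (hx : ∀ i, 0 ≤ x i) (hx0 : x ≠ 0) (r : ℝ) (hr : 0 ≤ r)
    (h : ∀ i, r * x i ^ k ≤ tapp T x i) :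
    ∃ z ∈ stdSimplex ℝ ι, ∃ s, r ≤ s ∧ s ≤ ∑ i, ∑ β, T i β ∧ ∀ i, tapp T z i = s * z i ^ k := by
  have hT' : TNonneg T := fun i β => (hT i β).le
  set C := ∑ i, ∑ β, T i β with hC
  let K : Set ((ι → ℝ) × ℝ) :=
    (stdSimplex ℝ ι ×ˢ Set.Icc r C) ∩ {p | ∀ i, p.2 * p.1 i ^ k ≤ tapp T p.1 i}
  have hKc : IsCompact K := by
    refine ((isCompact_stdSimplex ℝ ι).prod isCompact_Icc).inter_right ?_
    simp only [Set.ofPred_forall]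
    refine isClosed_iInter fun i => isClosed_le (by fun_prop) ((tapp_cont T i).comp continuous_fst)
  have mem : ∀ (y : ι → ℝ) (s : ℝ), (∀ i, 0 ≤ y i) → y ≠ 0 → r ≤ s →
      (∀ i, s * y i ^ k ≤ tapp T y i) → ∃ z, (z, s) ∈ K := by
    intro y s hy hy0 hs hys
    obtain ⟨z, hz, hzs⟩ := exists_simplex T y hy hy0 s hys
    exact ⟨z, ⟨hz, hs, sub_bound T hT' y hy hy0 s hys⟩, hzs⟩
  obtain ⟨z0, hz0⟩ := mem x r hx hx0 le_rfl h
  obtain ⟨⟨z, s⟩, ⟨⟨hz, hrs, hsC⟩, hzs⟩, hmax⟩ := hKc.exists_isMaxOn ⟨_, hz0⟩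
    (f := fun p => p.2) continuous_snd.continuousOn
  simp only [Set.mem_ofPred_eq] at hz hrs hsC hzs
  refine ⟨z, hz, s, hrs, hsC, ?_⟩
  by_contra hne
  push Not at hne
  obtain ⟨j, hj⟩ := hne
  have hjlt : s * z j ^ k < tapp T z j := lt_of_le_of_ne (hzs j) (Ne.symm hj)
  have hs0 : 0 ≤ s := hr.trans hrs
  have hznn : ∀ i, 0 ≤ z i := hz.1
  have htn : ∀ i, 0 ≤ tapp T z i := fun i =>
    (mul_nonneg hs0 (pow_nonneg (hznn i) k)).trans (hzs i)
  let y : ι → ℝ := fun i => (tapp T z i) ^ ((k : ℝ)⁻¹)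
  have hyk : ∀ i, y i ^ k = tapp T z i := fun i => Real.rpow_inv_natCast_pow (htn i) hk.ne'
  have hy : ∀ i, 0 ≤ y i := fun i => Real.rpow_nonneg (htn i) _
  have hprod : ∀ β : Fin k → ι, s * ∏ l, z (β l) ≤ ∏ l, y (β l) := by
    intro β
    refine le_of_pow_le_pow_left₀ hk.ne' (Finset.prod_nonneg fun _ _ => hy _) ?_
    calc (s * ∏ l, z (β l)) ^ k = ∏ l, (s * z (β l) ^ k) := by
          rw [Finset.prod_mul_distrib, mul_pow, Finset.prod_pow]; simp
      _ ≤ ∏ l, (y (β l) ^ k) := Finset.prod_le_prod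
          (fun _ _ => mul_nonneg hs0 (pow_nonneg (hznn _) k)) (fun l _ => by rw [hyk]; exact hzs _)
      _ = _ := by rw [Finset.prod_pow]
  have hstrict : ∀ i, s * y i ^ k < tapp T y i := by
    intro i
    rw [hyk]
    unfold tapp
    rw [Finset.mul_sum]
    refine Finset.sum_lt_sum (fun β _ => ?_) ⟨fun _ => j, Finset.mem_univ _, ?_⟩
    · rw [mul_left_comm]
      exact mul_le_mul_of_nonneg_left (hprod β) (hT' i β)
    · rw [mul_left_comm]
      refine mul_lt_mul_of_pos_left ?_ (hT i _)
      simp only [Finset.prod_const, Finset.card_univ, Fintype.card_fin, hyk]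
      exact hjlt
  have hy0 : y ≠ 0 := by
    intro h0
    have h1 := hyk j
    rw [h0] at h1
    simp only [Pi.zero_apply, zero_pow hk.ne'] at h1
    have := mul_nonneg hs0 (pow_nonneg (hznn j) k)
    linarith
  -- a uniform improvement
  obtain ⟨d, hd, hdy⟩ : ∃ d, 0 < d ∧ ∀ i, (s + d) * y i ^ k ≤ tapp T y i := by
    have hev : ∀ᶠ d : ℝ in nhdsWithin 0 (Set.Ioi 0), ∀ i, (s + d) * y i ^ k < tapp T y i := by
      refine Filter.eventually_all.mpr fun i => ?_
      apply nhdsWithin_le_nhds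
      have hc : ContinuousAt (fun d : ℝ => (s + d) * y i ^ k) 0 := by fun_prop
      exact hc.eventually_lt continuousAt_const (by simpa using hstrict i)
    obtain ⟨d, hd1, hd2⟩ := (hev.and self_mem_nhdsWithin).exists
    exact ⟨d, hd2, fun i => (hd1 i).le⟩
  obtain ⟨w, hw⟩ := mem y (s + d) hy hy0 (by linarith) hdy
  have := hmax hw
  simp only [Set.mem_ofPred_eq] at this
  linarith

/-- Perron-Frobenius for nonnegative tensors. -/
lemma pf {ι : Type*} [Fintype ι] {k : ℕ} (hk : 0 < k) (T : ι → (Fin k → ι) → ℝ)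
    (hT : TNonneg T)
    (x : ι → ℝ) (hx : ∀ i, 0 ≤ x i) (hx0 : x ≠ 0) (r : ℝ) (hr : 0 ≤ r)
    (h : ∀ i, r * x i ^ k ≤ tapp T x i) :
    ∃ z ∈ stdSimplex ℝ ι, ∃ s, r ≤ s ∧ ∀ i, tapp T z i = s * z i ^ k := by
  let Te : ℝ → ι → (Fin k → ι) → ℝ := fun e i β => T i β + e
  let C := ∑ i, ∑ β, Te 1 i β
  let K : Set (((ι → ℝ) × ℝ) × ℝ) :=
    ((stdSimplex ℝ ι ×ˢ Set.Icc r C) ×ˢ Set.Icc 0 1) ∩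
      {p | ∀ i, tapp (Te p.2) p.1.1 i = p.1.2 * p.1.1 i ^ k}
  have hKc : IsCompact K := by
    refine (((isCompact_stdSimplex ℝ ι).prod isCompact_Icc).prod isCompact_Icc).inter_right ?_
    simp only [Set.ofPred_forall]
    refine isClosed_iInter fun i => isClosed_eq ?_ (by fun_prop)
    simp only [tapp, Te]
    fun_prop
  have himg : IsClosed (Prod.snd '' K) := (hKc.image continuous_snd).isClosed
  have hsub : Set.Ioc (0 : ℝ) 1 ⊆ Prod.snd '' K := by
    intro e he
    have hle : ∀ i, r * x i ^ k ≤ tapp (Te e) x i := by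
      intro i
      refine (h i).trans ?_
      unfold tapp
      refine Finset.sum_le_sum fun β _ => mul_le_mul_of_nonneg_right ?_
        (Finset.prod_nonneg fun _ _ => hx _)
      simp only [Te]
      linarith [he.1]
    obtain ⟨z, hz, s, hrs, hsC, hzs⟩ := pf_pos hk (Te e)
      (fun i β => add_pos_of_nonneg_of_pos (hT i β) he.1) x hx hx0 r hr hle
    refine ⟨((z, s), e), ⟨⟨⟨hz, hrs, hsC.trans ?_⟩, he.1.le, he.2⟩, hzs⟩, rfl⟩
    refine Finset.sum_le_sum fun i _ => Finset.sum_le_sum fun β _ => ?_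
    simp only [Te]
    linarith [he.2]
  have h0 : (0 : ℝ) ∈ Prod.snd '' K := by
    have h1 := himg.closure_subset_iff.mpr hsub
    rw [closure_Ioc (by norm_num)] at h1
    exact h1 ⟨le_rfl, zero_le_one⟩
  obtain ⟨⟨⟨z, s⟩, e⟩, ⟨⟨⟨hz, hrs, -⟩, -⟩, hzs⟩, he⟩ := h0
  simp only [Set.mem_ofPred_eq] at hz hrs hzs he
  subst he
  refine ⟨z, hz, s, hrs, fun i => ?_⟩
  have := hzs i
  simpa [Te] using this

/-- Sub-eigenvalues are bounded by the spectral radius. -/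
lemma sub_le_specRad {ι : Type*} [Fintype ι] {k : ℕ} (hk : 0 < k) (T : ι → (Fin k → ι) → ℝ)
    (hT : TNonneg T)
    (x : ι → ℝ) (hx : ∀ i, 0 ≤ x i) (hx0 : x ≠ 0) (r : ℝ) (hr : 0 ≤ r)
    (h : ∀ i, r * x i ^ k ≤ tapp T x i) : r ≤ specRad T := by
  obtain ⟨z, hz, s, hrs, hzs⟩ := pf hk T hT x hx hx0 r hr h
  have he : TIsEig T (s : ℂ) := by
    refine ⟨fun i => (z i : ℂ), ?_, fun i => ?_⟩
    · intro h0
      apply simplex_ne z hz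
      funext i
      simpa using congrFun h0 i
    · have := hzs i
      unfold tapp at this
      have h2 := congrArg (fun t : ℝ => (t : ℂ)) this
      push_cast at h2
      exact h2
  have := le_specRad T hT _ he
  rw [Complex.norm_real, Real.norm_of_nonneg (hr.trans hrs)] at this
  linarith

/-- Sums over index tuples inside `S`. -/
lemma sum_sub {ι R : Type*} [Fintype ι] [AddCommMonoid R] {k : ℕ} (S : Finset ι)
    (f : (Fin k → ι) → R) (hf : ∀ β, (∃ l, β l ∉ S) → f β = 0) :
    ∑ β : Fin k → {i // i ∈ S}, f (fun l => (β l).val) = ∑ β, f β := by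
  classical
  refine Finset.sum_of_injOn (fun β l => (β l).val) ?_ (by simp) ?_ (fun _ _ => rfl)
  · intro a _ b _ hab
    funext l
    exact Subtype.ext (congrFun hab l)
  · intro β _ hβ
    apply hf
    by_contra hcon
    push Not at hcon
    exact hβ ⟨fun l => ⟨β l, hcon l⟩, by simp, rfl⟩

lemma induced_nonneg {ι : Type*} {k : ℕ} (T : ι → (Fin k → ι) → ℝ) (hT : TNonneg T)
    (S : Finset ι) : TNonneg (inducedT T S) := fun _ _ => hT _ _

/-- Eigenvalues of induced tensors through supported vectors. -/
lemma eig_iff {ι : Type*} [Fintype ι] {k : ℕ} (T : ι → (Fin k → ι) → ℝ) (S : Finset ι)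
    (lam : ℂ) : TIsEig (inducedT T S) lam ↔ ∃ x : ι → ℂ, x ≠ 0 ∧ (∀ i ∉ S, x i = 0) ∧
      ∀ i ∈ S, (∑ β : Fin k → ι, (T i β : ℂ) * ∏ l, x (β l)) = lam * x i ^ k := by
  classical
  have key : ∀ (x : ι → ℂ), (∀ i ∉ S, x i = 0) → ∀ i,
      ∑ β : Fin k → {i // i ∈ S}, (T i (fun l => (β l).val) : ℂ) * ∏ l, x (β l).val
        = ∑ β : Fin k → ι, (T i β : ℂ) * ∏ l, x (β l) := by
    intro x hx i
    refine sum_sub S (fun β => (T i β : ℂ) * ∏ l, x (β l)) ?_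
    rintro β ⟨l, hl⟩
    rw [Finset.prod_eq_zero (Finset.mem_univ l) (hx _ hl), mul_zero]
  constructor
  · rintro ⟨x, hx0, hx⟩
    obtain ⟨y, hext, hyS⟩ : ∃ y : ι → ℂ, (∀ i : {i // i ∈ S}, y i.val = x i) ∧
        ∀ i ∉ S, y i = 0 :=
      ⟨fun i => if h : i ∈ S then x ⟨i, h⟩ else 0, fun i => by simp, fun i hi => by simp [hi]⟩
    refine ⟨y, ?_, hyS, ?_⟩
    · intro h0
      apply hx0
      funext i
      rw [← hext i, h0]
      rfl
    · intro i hi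
      rw [← key y hyS i]
      simp only [hext]
      rw [hext ⟨i, hi⟩]
      exact hx ⟨i, hi⟩
  · rintro ⟨x, hx0, hxS, hx⟩
    refine ⟨fun i => x i.val, ?_, ?_⟩
    · intro h0
      apply hx0
      funext i
      by_cases hi : i ∈ S
      · exact congrFun h0 ⟨i, hi⟩
      · exact hxS i hi
    · intro i
      rw [← hx i.val i.2, ← key x hxS i.val]
      rfl

/-- Monotonicity of the spectral radius. -/
lemma specRad_mono {ι : Type*} [Fintype ι] {k : ℕ} (hk : 0 < k) (T : ι → (Fin k → ι) → ℝ)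
    (hT : TNonneg T) (A S : Finset ι) (hAS : A ⊆ S) :
    specRad (inducedT T A) ≤ specRad (inducedT T S) := by
  refine Real.sSup_le ?_ (specRad_nonneg _)
  rintro r ⟨lam, hlam, rfl⟩
  obtain ⟨x, hx0, hxA, hx⟩ := (eig_iff T A lam).mp hlam
  refine sub_le_specRad hk _ (induced_nonneg T hT S) (fun i => ‖x i.val‖)
    (fun _ => norm_nonneg _) ?_ _ (norm_nonneg _) ?_
  · intro h0
    apply hx0
    funext i
    by_cases hi : i ∈ S
    · simpa using congrFun h0 ⟨i, hi⟩
    · exact hxA i (fun h => hi (hAS h))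
  · intro i
    have e : tapp (inducedT T S) (fun i => ‖x i.val‖) i = tapp T (fun j => ‖x j‖) i.val := by
      unfold tapp
      refine sum_sub S (fun β => T i.val β * ∏ l, ‖x (β l)‖) ?_
      rintro β ⟨l, hl⟩
      rw [Finset.prod_eq_zero (Finset.mem_univ l) (by rw [hxA _ (fun h => hl (hAS h)), norm_zero]),
        mul_zero]
    rw [e]
    by_cases hi : i.val ∈ A
    · exact eig_sub T hT x lam i.val (hx _ hi)
    · rw [hxA _ hi, norm_zero, zero_pow hk.ne', mul_zero]
      exact Finset.sum_nonneg fun β _ => mul_nonneg (hT _ _)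
        (Finset.prod_nonneg fun _ _ => norm_nonneg _)

/-- Splitting along a reducing subset. -/
lemma specRad_split {ι : Type*} [Fintype ι] [DecidableEq ι] {k : ℕ}
    (T : ι → (Fin k → ι) → ℝ) (hT : TNonneg T) (A S : Finset ι) (hAS : A ⊆ S)
    (hA : ∀ i ∈ A, ∀ β : Fin k → ι, (∀ l, β l ∈ S) → (∃ l, β l ∉ A) → T i β = 0) :
    specRad (inducedT T S) ≤ max (specRad (inducedT T A)) (specRad (inducedT T (S \ A))) := by
  refine Real.sSup_le ?_ ((specRad_nonneg _).trans (le_max_left _ _))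
  rintro r ⟨lam, hlam, rfl⟩
  obtain ⟨x, hx0, hxS, hx⟩ := (eig_iff T S lam).mp hlam
  by_cases hz : ∃ i ∈ A, x i ≠ 0
  · refine le_max_of_le_left (le_specRad _ (induced_nonneg T hT A) _ ((eig_iff T A lam).mpr
      ⟨fun i => if i ∈ A then x i else 0, ?_, ?_, ?_⟩))
    · obtain ⟨i, hi, hxi⟩ := hz
      intro h0
      have := congrFun h0 i
      simp [hi] at this
      exact hxi this
    · intro i hi
      simp [hi]
    · intro i hi
      simp only [hi, if_true]
      rw [← hx i (hAS hi)]
      refine Finset.sum_congr rfl fun β _ => ?_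
      by_cases hβ : ∀ l, β l ∈ A
      · simp [hβ]
      · push Not at hβ
        by_cases hβS : ∀ l, β l ∈ S
        · rw [hA i hi β hβS hβ]
          simp
        · push Not at hβS
          obtain ⟨l, hl⟩ := hβS
          rw [Finset.prod_eq_zero (f := fun l => x (β l)) (Finset.mem_univ l) (hxS _ hl),
            Finset.prod_eq_zero (Finset.mem_univ l) (if_neg fun h => hl (hAS h))]
  · push Not at hz
    refine le_max_of_le_right (le_specRad _ (induced_nonneg T hT _) _ ((eig_iff T _ lam).mpr
      ⟨x, hx0, ?_, ?_⟩))
    · intro i hi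
      by_cases hiA : i ∈ A
      · exact hz i hiA
      · exact hxS i (fun h => hi (Finset.mem_sdiff.mpr ⟨h, hiA⟩))
    · intro i hi
      exact hx i (Finset.mem_sdiff.mp hi).1

lemma partition_exists {ι : Type*} [Fintype ι] [DecidableEq ι] {k : ℕ} (hk : 0 < k)
    (T : ι → (Fin k → ι) → ℝ) (hT : TNonneg T) (S : Finset ι) : S.Nonempty →
    ∃ Q : Finset (Finset ι), (∀ A ∈ Q, A.Nonempty) ∧
      (∀ A ∈ Q, ∀ B ∈ Q, A ≠ B → Disjoint A B) ∧ (Q.biUnion id = S) ∧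
      (∀ A ∈ Q, MatIrreducible (repMat (inducedT T A))) ∧
      ∃ A ∈ Q, specRad (inducedT T S) ≤ specRad (inducedT T A) := by
  induction S using Finset.strongInduction with
  | H S ih =>
    intro hS
    by_cases hirr : MatReducible (repMat (inducedT T S))
    swap
    · refine ⟨{S}, ?_, ?_, ?_, ?_, S, by simp, le_rfl⟩
      · simpa using hS
      · simp
      · simp
      · intro X hX
        rw [Finset.mem_singleton.mp hX]
        exact hirr
    · obtain ⟨I, hI, hIu, hzero⟩ := hirr
      let A : Finset ι := I.map (Function.Embedding.subtype _)
      have hAS : A ⊆ S := by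
        intro a ha
        obtain ⟨b, -, rfl⟩ := Finset.mem_map.mp ha
        exact b.2
      have hmem : ∀ a : {i // i ∈ S}, a.val ∈ A ↔ a ∈ I := by
        intro a
        exact Finset.mem_map' (Function.Embedding.subtype _)
      have hAne : A.Nonempty := hI.map
      obtain ⟨b, hb⟩ : ∃ b, b ∉ I := by
        by_contra hcon
        push Not at hcon
        exact hIu (Finset.eq_univ_iff_forall.mpr hcon)
      have hbA : b.val ∉ A := fun h => hb ((hmem b).mp h)
      have hBne : (S \ A).Nonempty := ⟨b.val, Finset.mem_sdiff.mpr ⟨b.2, hbA⟩⟩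
      have hAlt : A ⊂ S := Finset.ssubset_iff_subset_ne.mpr ⟨hAS, fun h => hbA (by rw [h]; exact b.2)⟩
      have hBlt : S \ A ⊂ S := Finset.sdiff_ssubset hAS hAne
      have hA : ∀ i ∈ A, ∀ β : Fin k → ι, (∀ l, β l ∈ S) → (∃ l, β l ∉ A) → T i β = 0 := by
        rintro i hi β hβ ⟨l, hl⟩
        have h1 := hzero ⟨i, hAS hi⟩ ((hmem ⟨i, hAS hi⟩).mp hi) ⟨β l, hβ l⟩
          (fun h => hl ((hmem ⟨β l, hβ l⟩).mpr h))
        unfold repMat at h1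
        rw [Finset.sum_eq_zero_iff_of_nonneg] at h1
        · have h2 := h1 (fun l => ⟨β l, hβ l⟩) (Finset.mem_univ _)
          rw [if_pos ⟨l, rfl⟩] at h2
          exact h2
        · intro γ _
          split_ifs
          · exact hT _ _
          · exact le_rfl
      obtain ⟨Q1, h11, h12, h13, h14, A1, h15, h16⟩ := ih A hAlt hAne
      obtain ⟨Q2, h21, h22, h23, h24, A2, h25, h26⟩ := ih (S \ A) hBlt hBne
      have hs1 : ∀ X ∈ Q1, X ⊆ A := fun X hX => h13 ▸ Finset.subset_biUnion_of_mem id hX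
      have hs2 : ∀ X ∈ Q2, X ⊆ S \ A := fun X hX => h23 ▸ Finset.subset_biUnion_of_mem id hX
      have hd : Disjoint A (S \ A) := Finset.disjoint_sdiff
      refine ⟨Q1 ∪ Q2, ?_, ?_, ?_, ?_, ?_⟩
      · intro X hX
        rcases Finset.mem_union.mp hX with h | h
        exacts [h11 X h, h21 X h]
      · intro X hX Y hY hne
        rcases Finset.mem_union.mp hX with h | h <;> rcases Finset.mem_union.mp hY with h' | h'
        · exact h12 X h Y h' hne
        · exact Finset.disjoint_of_subset_left (hs1 X h)
            (Finset.disjoint_of_subset_right (hs2 Y h') hd)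
        · exact (Finset.disjoint_of_subset_left (hs1 Y h')
            (Finset.disjoint_of_subset_right (hs2 X h) hd)).symm
        · exact h22 X h Y h' hne
      · rw [Finset.union_biUnion, h13, h23]
        exact Finset.union_sdiff_of_subset hAS
      · intro X hX
        rcases Finset.mem_union.mp hX with h | h
        exacts [h14 X h, h24 X h]
      · have hsp := specRad_split T hT A S hAS hA
        rcases le_max_iff.mp hsp with h | h
        · exact ⟨A1, Finset.mem_union_left _ h15, h.trans h16⟩
        · exact ⟨A2, Finset.mem_union_right _ h25, h.trans h26⟩

lemma specRad_univ {ι : Type*} [Fintype ι] {k : ℕ} (T : ι → (Fin k → ι) → ℝ) :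
    specRad (inducedT T Finset.univ) = specRad T := by
  unfold specRad
  congr 1
  ext r
  simp only [Set.mem_ofPred_eq, eig_iff]
  simp [TIsEig]

end SpecAux

theorem specRad_eq_max_over_weakly_irreducible_blocks
    (m n : ℕ) (hm : 2 ≤ m) (hn : 2 ≤ n)
    (T : Fin n → (Fin (m - 1) → Fin n) → ℝ) (hT : TNonneg T) :
    ∃ (k : ℕ) (hk : 0 < k) (P : Fin k → Finset (Fin n)),
      (∀ j, (P j).Nonempty) ∧
      (∀ j j', j ≠ j' → Disjoint (P j) (P j')) ∧
      (Finset.univ.biUnion P = (Finset.univ : Finset (Fin n))) ∧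
      (∀ j, MatIrreducible (repMat (inducedT T (P j)))) ∧
      specRad T = (Finset.univ : Finset (Fin k)).sup' ⟨⟨0, hk⟩, Finset.mem_univ _⟩
        (fun j => specRad (inducedT T (P j))) := by
  have hk : 0 < m - 1 := by omega
  obtain ⟨Q, h1, h2, h3, h4, A, hA, h5⟩ := SpecAux.partition_exists hk T hT Finset.univ
    ⟨⟨0, by omega⟩, Finset.mem_univ _⟩
  rw [SpecAux.specRad_univ] at h5
  refine ⟨Q.card, Finset.card_pos.mpr ⟨A, hA⟩, fun j => (Q.equivFin.symm j).val, ?_, ?_, ?_, ?_, ?_⟩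
  · exact fun j => h1 _ (Q.equivFin.symm j).2
  · intro j j' hne
    refine h2 _ (Q.equivFin.symm j).2 _ (Q.equivFin.symm j').2 fun h => hne ?_
    exact Q.equivFin.symm.injective (Subtype.ext h)
  · rw [Finset.eq_univ_iff_forall]
    intro a
    have ha : a ∈ Q.biUnion id := h3 ▸ Finset.mem_univ a
    obtain ⟨X, hX, haX⟩ := Finset.mem_biUnion.mp ha
    refine Finset.mem_biUnion.mpr ⟨Q.equivFin ⟨X, hX⟩, Finset.mem_univ _, ?_⟩
    simpa using haX
  · exact fun j => h4 _ (Q.equivFin.symm j).2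
  · apply le_antisymm
    · refine h5.trans ?_
      have := Finset.le_sup' (fun j => specRad (inducedT T (Q.equivFin.symm j).val))
        (Finset.mem_univ (Q.equivFin ⟨A, hA⟩))
      refine le_trans (le_of_eq ?_) this
      have e : (Q.equivFin.symm (Q.equivFin ⟨A, hA⟩)).val = A := by simp
      rw [e]
    · refine Finset.sup'_le _ _ fun j _ => ?_
      rw [← SpecAux.specRad_univ T]
      exact SpecAux.specRad_mono hk T hT _ _ (Finset.subset_univ _)
end

section
/- Let T be a nonnegative tensor of order m ≥ 2 and dimension n ≥ 2. If T is reducible, then there exists an ordered partition {I_1,…,I_k} of {1,…,n} into pairwise disjoint nonempty sets whose union is {1,…,n} such that every induced tensor T_{I_j} is irreducible (one-dimensional induced tensors being regarded as irreducible by convention), and T_{s t_2 … t_m} = 0 for all s ∈ I_p and all t_2,…,t_m ∈ I_q whenever p > q. -/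
open Finset

theorem partition_aux {n d : ℕ} (T : Fin n → (Fin d → Fin n) → ℝ) (S : Finset (Fin n)) :
    ∃ (k : ℕ) (P : Fin k → Finset (Fin n)),
      (∀ j, (P j).Nonempty) ∧
      (∀ j j', j ≠ j' → Disjoint (P j) (P j')) ∧
      (∀ x, x ∈ S ↔ ∃ j, x ∈ P j) ∧
      (∀ j, ¬ TReducible (inducedT T (P j))) ∧
      ∀ p q : Fin k, q < p → ∀ s ∈ P p,
        ∀ β : Fin d → Fin n, (∀ l, β l ∈ P q) → T s β = 0 := by
  induction S using Finset.strongInduction with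
  | H S ih =>
  rcases S.eq_empty_or_nonempty with rfl | hS
  · exact ⟨0, Fin.elim0, fun j => j.elim0, fun j => j.elim0, by simp, fun j => j.elim0,
      fun j => j.elim0⟩
  by_cases hr : TReducible (inducedT T S)
  · obtain ⟨J, hJ, hJu, hz⟩ := hr
    set I : Finset (Fin n) := J.map (Function.Embedding.subtype _) with hI
    have memI : ∀ x, x ∈ I ↔ ∃ h : x ∈ S, (⟨x, h⟩ : {i // i ∈ S}) ∈ J := by
      intro x; simp [hI]
    have hIS : I ⊆ S := fun x hx => ((memI x).1 hx).1
    obtain ⟨y, hy⟩ : ∃ y, y ∉ J := by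
      by_contra! h
      exact hJu (Finset.eq_univ_iff_forall.2 h)
    have hyI : y.1 ∉ I := fun h => hy ((memI _).1 h).2
    have hIne : I.Nonempty := hJ.map
    obtain ⟨x, hx⟩ := hIne
    have hzI : ∀ s ∈ I, ∀ β : Fin d → Fin n, (∀ l, β l ∈ S \ I) → T s β = 0 := by
      intro s hs β hβ
      obtain ⟨h1, h2⟩ := (memI s).1 hs
      have hb : ∀ l, β l ∈ S ∧ β l ∉ I := fun l => Finset.mem_sdiff.1 (hβ l)
      exact hz ⟨s, h1⟩ h2 (fun l => ⟨β l, (hb l).1⟩)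
        (fun l h => (hb l).2 ((memI _).2 ⟨(hb l).1, h⟩))
    have s1 : I ⊂ S := Finset.ssubset_iff_subset_ne.2 ⟨hIS, fun h => hyI (by
      have h' : ∀ w ∈ S, w ∈ I := fun w hw => by rw [h]; exact hw
      exact h' _ y.2)⟩
    have s2 : S \ I ⊂ S := Finset.ssubset_iff_subset_ne.2
      ⟨Finset.sdiff_subset, fun h => by
        have := hIS hx
        rw [← h] at this
        exact (Finset.mem_sdiff.1 this).2 hx⟩
    obtain ⟨k2, P2, n2, d2, u2, i2, z2⟩ := ih I s1
    obtain ⟨k1, P1, n1, d1, u1, i1, z1⟩ := ih (S \ I) s2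
    have hd : ∀ a b, Disjoint (P1 a) (P2 b) := by
      intro a b
      rw [Finset.disjoint_left]
      intro w hw hw'
      exact (Finset.mem_sdiff.1 ((u1 w).2 ⟨a, hw⟩)).2 ((u2 w).2 ⟨b, hw'⟩)
    refine ⟨k1 + k2, Fin.append P1 P2, ?_, ?_, ?_, ?_, ?_⟩
    · intro j
      induction j using Fin.addCases with
      | left a => simpa using n1 a
      | right a => simpa using n2 a
    · intro j j' hne
      induction j using Fin.addCases with
      | left a =>
        induction j' using Fin.addCases with
        | left b =>
          simp only [Fin.append_left]
          exact d1 a b (fun h => hne (by rw [h]))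
        | right b => simpa only [Fin.append_left, Fin.append_right] using hd a b
      | right a =>
        induction j' using Fin.addCases with
        | left b => simpa only [Fin.append_left, Fin.append_right] using (hd b a).symm
        | right b =>
          simp only [Fin.append_right]
          exact d2 a b (fun h => hne (by rw [h]))
    · intro w
      constructor
      · intro hw
        by_cases hwI : w ∈ I
        · obtain ⟨b, hb⟩ := (u2 w).1 hwI
          exact ⟨Fin.natAdd k1 b, by simpa using hb⟩
        · obtain ⟨b, hb⟩ := (u1 w).1 (Finset.mem_sdiff.2 ⟨hw, hwI⟩)
          exact ⟨Fin.castAdd k2 b, by simpa using hb⟩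
      · rintro ⟨j, hj⟩
        induction j using Fin.addCases with
        | left a =>
          rw [Fin.append_left] at hj
          exact (Finset.mem_sdiff.1 ((u1 w).2 ⟨a, hj⟩)).1
        | right a =>
          rw [Fin.append_right] at hj
          exact hIS ((u2 w).2 ⟨a, hj⟩)
    · intro j
      induction j using Fin.addCases with
      | left a => rw [Fin.append_left]; exact i1 a
      | right a => rw [Fin.append_right]; exact i2 a
    · intro p q hqp s hs β hβ
      induction p using Fin.addCases with
      | left a =>
        induction q using Fin.addCases with
        | left b =>
          simp only [Fin.append_left] at hs hβ
          exact z1 a b (Fin.lt_def.2 (Fin.lt_def.1 hqp)) s hs β hβ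
        | right b =>
          exfalso
          simp only [Fin.lt_def, Fin.val_natAdd, Fin.val_castAdd] at hqp
          omega
      | right a =>
        induction q using Fin.addCases with
        | left b =>
          simp only [Fin.append_left, Fin.append_right] at hs hβ
          exact hzI s ((u2 s).2 ⟨a, hs⟩) β (fun l => (u1 _).2 ⟨b, hβ l⟩)
        | right b =>
          simp only [Fin.append_right] at hs hβ
          exact z2 a b (by simpa using hqp) s hs β hβ
  · refine ⟨1, fun _ => S, fun _ => hS, fun j j' h => absurd (Subsingleton.elim j j') h,
      by simp, fun _ => hr, fun p q h => ?_⟩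
    exact absurd (Subsingleton.elim q p) h.ne

theorem reducible_partition_into_irreducible_blocks
    (m n : ℕ) (hm : 2 ≤ m) (hn : 2 ≤ n)
    (T : Fin n → (Fin (m - 1) → Fin n) → ℝ) (hT : TNonneg T)
    (hred : TReducible T) :
    ∃ (k : ℕ) (P : Fin k → Finset (Fin n)),
      (∀ j, (P j).Nonempty) ∧
      (∀ j j', j ≠ j' → Disjoint (P j) (P j')) ∧
      (Finset.univ.biUnion P = (Finset.univ : Finset (Fin n))) ∧
      (∀ j, ¬ TReducible (inducedT T (P j))) ∧
      ∀ p q : Fin k, q < p → ∀ s ∈ P p,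
        ∀ β : Fin (m - 1) → Fin n, (∀ l, β l ∈ P q) → T s β = 0 := by
  obtain ⟨k, P, h1, h2, h3, h4, h5⟩ := partition_aux T Finset.univ
  refine ⟨k, P, h1, h2, ?_, h4, h5⟩
  ext x
  simpa using h3 x
end

section
/- Let T be a weakly primitive nonnegative tensor of order m ≥ 2 and dimension n ≥ 2, and let (λ*, x*) be its unique positive eigenpair normalized so that Σ_i (x*)_i = 1. Define the power iteration: given x^{(0)} with all components positive and Σ_i x^{(0)}_i = 1, set y^{(k+1)}_i := ((T (x^{(k)})^{m-1})_i)^{1/(m-1)} and x^{(k+1)} := y^{(k+1)} / (Σ_j y^{(k+1)}_j). Then the sequence x^{(k)} converges to x*, and there exist a constant θ ∈ (0,1) and a positive integer M such that d(x^{(k)}, x*) ≤ θ^{k/M} · d(x^{(0)}, x*) / θ for all k ≥ 1, where for vectors u, v with all components positive, d(u,v) := log( max_i (v_i/u_i) ) − log( min_i (v_i/u_i) ) is the Hilbert projective metric. -/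
open Finset

/-- Abstract contraction lemma: `D` is the oscillation of `w`. -/
lemma aux_contract {n : ℕ} (P : Matrix (Fin n) (Fin n) ℝ)
    (hP0 : ∀ i j, 0 ≤ P i j) (hP1 : ∀ i, ∑ j, P i j = 1)
    (w : ℕ → Fin n → ℝ) (c : ℕ → ℝ)
    (hlow : ∀ k i, (∑ j, P i j * w k j) + c k ≤ w (k + 1) i)
    (hup : ∀ k B, (∀ j, w k j ≤ B) → ∀ i, w (k + 1) i ≤ B + c k)
    (q : ℕ) : (∀ i j, 0 ≤ (P ^ q) i j) ∧ (∀ i, ∑ j, (P ^ q) i j = 1) ∧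
      ∀ k, ∃ C, (∀ i, (∑ j, (P ^ q) i j * w k j) + C ≤ w (k + q) i) ∧
        ∀ B, (∀ j, w k j ≤ B) → ∀ i, w (k + q) i ≤ B + C := by
  induction q with
  | zero =>
    refine ⟨fun i j => ?_, fun i => ?_, fun k => ⟨0, fun i => ?_, fun B hB i => ?_⟩⟩
    · simp only [pow_zero, Matrix.one_apply]; split_ifs <;> norm_num
    · simp [Matrix.one_apply]
    · simp [Matrix.one_apply]
    · simpa using hB i
  | succ q ih =>
    obtain ⟨h0, h1, h2⟩ := ih
    have hmul : ∀ i j, (P ^ (q + 1)) i j = ∑ l, P i l * (P ^ q) l j := by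
      intro i j; rw [pow_succ', Matrix.mul_apply]
    refine ⟨fun i j => ?_, fun i => ?_, fun k => ?_⟩
    · rw [hmul]; exact Finset.sum_nonneg fun l _ => mul_nonneg (hP0 _ _) (h0 _ _)
    · simp_rw [hmul]
      rw [Finset.sum_comm]
      simp_rw [← Finset.mul_sum, h1, mul_one, hP1]
    · obtain ⟨C, hC1, hC2⟩ := h2 k
      refine ⟨C + c (k + q), fun i => ?_, fun B hB i => ?_⟩
      · refine le_trans ?_ (hlow (k + q) i)
        have e : ∑ j, (P ^ (q + 1)) i j * w k j = ∑ l, P i l * ∑ j, (P ^ q) l j * w k j := by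
          simp_rw [hmul, Finset.sum_mul, Finset.mul_sum]
          rw [Finset.sum_comm]
          simp_rw [mul_assoc]
        have e2 : ∑ l, P i l * ((∑ j, (P ^ q) l j * w k j) + C) ≤ ∑ l, P i l * w (k + q) l :=
          Finset.sum_le_sum fun l _ => mul_le_mul_of_nonneg_left (hC1 l) (hP0 i l)
        simp_rw [mul_add] at e2
        rw [Finset.sum_add_distrib, ← Finset.sum_mul, hP1, one_mul] at e2
        rw [e]; linarith
      · have := hup (k + q) (B + C) (hC2 B hB) i
        exact this.trans (add_assoc _ _ _).le

lemma aux_contract2 {n : ℕ} (P : Matrix (Fin n) (Fin n) ℝ)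
    (hP0 : ∀ i j, 0 ≤ P i j) (hP1 : ∀ i, ∑ j, P i j = 1)
    (w : ℕ → Fin n → ℝ) (c : ℕ → ℝ)
    (hlow : ∀ k i, (∑ j, P i j * w k j) + c k ≤ w (k + 1) i)
    (hup : ∀ k B, (∀ j, w k j ≤ B) → ∀ i, w (k + 1) i ≤ B + c k)
    (D : ℕ → ℝ) (hD : ∀ k i j, w k i - w k j ≤ D k)
    (hD' : ∀ k, ∃ i j, D k = w k i - w k j)
    (q : ℕ) (ε : ℝ) (hε : ∀ i j, ε ≤ (P ^ q) i j) (k : ℕ) :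
    D (k + q) ≤ (1 - ε) * D k := by
  obtain ⟨h0, h1, h2⟩ := aux_contract P hP0 hP1 w c hlow hup q
  obtain ⟨C, hC1, hC2⟩ := h2 k
  obtain ⟨i, j, hij⟩ := hD' (k + q)
  have hne : Nonempty (Fin n) := ⟨i⟩
  obtain ⟨a, ha⟩ := Finite.exists_max (w k)
  have hDn : 0 ≤ D k := by have := hD k i i; linarith
  have A := hC2 (w k a) ha i
  have B := hC1 j
  have key : ∑ l, (P ^ q) j l * (w k a - w k l) ≤
      ∑ l, (P ^ q) j l * (D k * (1 - if l = a then 1 else 0)) := by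
    refine Finset.sum_le_sum fun l _ => mul_le_mul_of_nonneg_left ?_ (h0 j l)
    split_ifs with h
    · simp [h]
    · simpa using hD k a l
  have e1 : ∑ l, (P ^ q) j l * (w k a - w k l) = w k a - ∑ l, (P ^ q) j l * w k l := by
    simp_rw [mul_sub]
    rw [Finset.sum_sub_distrib, ← Finset.sum_mul, h1, one_mul]
  have e2 : ∑ l, (P ^ q) j l * (D k * (1 - if l = a then 1 else 0)) =
      (1 - (P ^ q) j a) * D k := by
    simp_rw [mul_sub, mul_one]
    rw [Finset.sum_sub_distrib, ← Finset.sum_mul, h1]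
    simp
    ring
  have e3 : (1 - (P ^ q) j a) * D k ≤ (1 - ε) * D k :=
    mul_le_mul_of_nonneg_right (by linarith [hε j a]) hDn
  rw [e1, e2] at key
  linarith

lemma aux_hilbert {n : ℕ} (hn : 0 < n) (u v : Fin n → ℝ) (hu : ∀ i, 0 < u i)
    (hv : ∀ i, 0 < v i) :
    (∀ i j, Real.log (u i / v i) - Real.log (u j / v j) ≤ hilbertD hn u v) ∧
    ∃ i j, hilbertD hn u v = Real.log (u i / v i) - Real.log (u j / v j) := by
  have hlog : ∀ i, Real.log (u i / v i) = - Real.log (v i / u i) := fun i => by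
    rw [← Real.log_inv, inv_div]
  have hp : ∀ i, 0 < v i / u i := fun i => div_pos (hv i) (hu i)
  have hne : (Finset.univ : Finset (Fin n)).Nonempty := ⟨⟨0, hn⟩, Finset.mem_univ _⟩
  obtain ⟨a, -, ha⟩ := Finset.exists_mem_eq_sup' hne (fun i => v i / u i)
  obtain ⟨b, -, hb⟩ := Finset.exists_mem_eq_inf' hne (fun i => v i / u i)
  have hD : hilbertD hn u v = Real.log (v a / u a) - Real.log (v b / u b) := by
    unfold hilbertD; rw [ha, hb]
  refine ⟨fun i j => ?_, b, a, ?_⟩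
  · rw [hD, hlog, hlog]
    have h1 : Real.log (v j / u j) ≤ Real.log (v a / u a) :=
      Real.log_le_log (hp j) (ha ▸ Finset.le_sup' (fun i => v i / u i) (Finset.mem_univ j))
    have h2 : Real.log (v b / u b) ≤ Real.log (v i / u i) :=
      Real.log_le_log (hp b) (hb ▸ Finset.inf'_le (fun i => v i / u i) (Finset.mem_univ i))
    linarith
  · rw [hD, hlog, hlog]; ring

/-- One step of the iteration in logarithmic coordinates. -/
lemma aux_step {n r : ℕ} (hr : 0 < r) (p : (Fin r → Fin n) → ℝ) (hp0 : ∀ β, 0 ≤ p β)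
    (hp1 : ∑ β, p β = 1) (w : Fin n → ℝ) :
    (∑ j, ((r : ℝ)⁻¹ * ∑ β, p β * ∑ l, if β l = j then (1 : ℝ) else 0) * w j) ≤
      (r : ℝ)⁻¹ * Real.log (∑ β, p β * Real.exp (∑ l, w (β l))) ∧
    0 < ∑ β, p β * Real.exp (∑ l, w (β l)) ∧
    ∀ B, (∀ j, w j ≤ B) →
      (r : ℝ)⁻¹ * Real.log (∑ β, p β * Real.exp (∑ l, w (β l))) ≤ B := by
  have hr' : (0 : ℝ) < r := by exact_mod_cast hr
  have hJ : Real.exp (∑ β, p β * ∑ l, w (β l)) ≤ ∑ β, p β * Real.exp (∑ l, w (β l)) := by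
    have := convexOn_exp.map_sum_le (t := Finset.univ) (w := p)
      (p := fun β => ∑ l, w (β l)) (fun β _ => hp0 β) hp1 (fun _ _ => Set.mem_univ _)
    simpa [smul_eq_mul] using this
  have hpos := lt_of_lt_of_le (Real.exp_pos _) hJ
  refine ⟨?_, hpos, fun B hB => ?_⟩
  · have e : (∑ j, ((r : ℝ)⁻¹ * ∑ β, p β * ∑ l, if β l = j then (1 : ℝ) else 0) * w j) =
        (r : ℝ)⁻¹ * ∑ β, p β * ∑ l, w (β l) := by
      have : ∀ β : Fin r → Fin n, ∑ l, w (β l) =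
          ∑ j, (∑ l, if β l = j then (1 : ℝ) else 0) * w j := by
        intro β
        simp_rw [Finset.sum_mul]
        rw [Finset.sum_comm]
        simp
      simp_rw [this, mul_assoc]
      rw [← Finset.mul_sum]
      congr 1
      simp_rw [Finset.mul_sum, Finset.sum_mul]
      rw [Finset.sum_comm]
      simp_rw [Finset.mul_sum, mul_assoc]
    rw [e]
    refine mul_le_mul_of_nonneg_left ?_ (by positivity)
    rw [← Real.log_exp (∑ β, p β * ∑ l, w (β l))]
    exact Real.log_le_log (Real.exp_pos _) hJ
  · have h1 : ∑ β, p β * Real.exp (∑ l, w (β l)) ≤ ∑ β, p β * Real.exp (r * B) := by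
      refine Finset.sum_le_sum fun β _ => mul_le_mul_of_nonneg_left ?_ (hp0 β)
      refine Real.exp_le_exp.2 ?_
      calc ∑ l, w (β l) ≤ ∑ _l : Fin r, B := Finset.sum_le_sum fun l _ => hB _
        _ = r * B := by simp
    rw [← Finset.sum_mul, hp1, one_mul] at h1
    have h2 := Real.log_le_log hpos h1
    rw [Real.log_exp] at h2
    rw [inv_mul_le_iff₀ hr']
    exact h2

lemma aux_pow_le {n : ℕ} (A P : Matrix (Fin n) (Fin n) ℝ) (c : ℝ) (hc : 0 < c)
    (hA : ∀ i j, 0 ≤ A i j) (h : ∀ i j, c * A i j ≤ P i j) (q : ℕ) :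
    ∀ i j, 0 ≤ (A ^ q) i j ∧ c ^ q * (A ^ q) i j ≤ (P ^ q) i j := by
  induction q with
  | zero =>
    intro i j
    simp only [pow_zero, Matrix.one_apply]
    split_ifs <;> norm_num
  | succ q ih =>
    intro i j
    rw [pow_succ A, pow_succ P, Matrix.mul_apply, Matrix.mul_apply]
    refine ⟨Finset.sum_nonneg fun l _ => mul_nonneg (ih _ _).1 (hA _ _), ?_⟩
    rw [Finset.mul_sum]
    refine Finset.sum_le_sum fun l _ => ?_
    have h1 := (ih i l).2
    have h0 := (ih i l).1
    calc c ^ (q + 1) * ((A ^ q) i l * A l j) = (c ^ q * (A ^ q) i l) * (c * A l j) := by ring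
      _ ≤ (P ^ q) i l * P l j := by
        apply mul_le_mul h1 (h l j) (mul_nonneg hc.le (hA _ _))
        exact le_trans (by positivity) h1

lemma aux_rate (D : ℕ → ℝ) (hD0 : 0 ≤ D 0) (θ : ℝ) (h0 : 0 < θ) (h1 : θ < 1) (p : ℕ) (hp : 0 < p)
    (hmono : ∀ k, D (k + 1) ≤ D k) (hc : ∀ k, D (k + p) ≤ θ * D k) (k : ℕ) :
    D k ≤ θ ^ ((k : ℝ) / (p : ℝ)) * D 0 / θ := by
  have hanti : Antitone D := antitone_nat_of_succ_le hmono
  have hq : ∀ q, D (p * q) ≤ θ ^ q * D 0 := by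
    intro q
    induction q with
    | zero => simp
    | succ q ih =>
      rw [mul_add, mul_one]
      calc _ ≤ θ * D (p * q) := hc _
        _ ≤ θ * (θ ^ q * D 0) := mul_le_mul_of_nonneg_left ih h0.le
        _ = _ := by ring
  have hp' : (0 : ℝ) < p := by exact_mod_cast hp
  have h2 : D k ≤ θ ^ (k / p) * D 0 := (hanti (Nat.mul_div_le k p)).trans (hq _)
  have h3 : θ ^ (k / p) ≤ θ ^ ((k : ℝ) / (p : ℝ)) / θ := by
    have e : θ ^ ((k : ℝ) / (p : ℝ)) / θ = θ ^ ((k : ℝ) / (p : ℝ) - 1) := by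
      rw [Real.rpow_sub h0, Real.rpow_one]
    rw [e, ← Real.rpow_natCast]
    refine Real.rpow_le_rpow_of_exponent_ge h0 h1.le ?_
    rw [sub_le_iff_le_add, div_le_iff₀ hp']
    have := Nat.lt_div_mul_add hp (a := k)
    have h4 : k ≤ (k / p + 1) * p := by rw [add_mul, one_mul]; omega
    exact_mod_cast h4
  calc D k ≤ _ := h2
    _ ≤ _ := mul_le_mul_of_nonneg_right h3 hD0
    _ = _ := by ring

lemma aux_main
    (r n : ℕ) (hr : 0 < r) (hn : 0 < n)
    (T : Fin n → (Fin r → Fin n) → ℝ) (hT : TNonneg T)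
    (hwp : MatPrimitive (repMat T))
    (lam : ℝ) (xs : Fin n → ℝ) (hxs : ∀ i, 0 < xs i)
    (heig : ∀ i, tapp T xs i = lam * xs i ^ r)
    (hsum : ∑ i, xs i = 1)
    (x : ℕ → Fin n → ℝ) (hx0 : ∀ i, 0 < x 0 i) (hx0sum : ∑ i, x 0 i = 1)
    (hiter : ∀ k, x (k + 1) = fun i =>
      (tapp T (x k) i) ^ ((r : ℝ)⁻¹) /
        ∑ j, (tapp T (x k) j) ^ ((r : ℝ)⁻¹)) :
    Filter.Tendsto x Filter.atTop (nhds xs) ∧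
    ∃ θ : ℝ, θ ∈ Set.Ioo (0 : ℝ) 1 ∧ ∃ M : ℕ, 0 < M ∧
      ∀ k : ℕ, 
        hilbertD hn (x k) xs ≤
          θ ^ ((k : ℝ) / (M : ℝ)) * hilbertD hn (x 0) xs / θ := by
  have hne : Nonempty (Fin n) := ⟨⟨0, hn⟩⟩
  obtain ⟨p, hp, hAp⟩ := hwp
  have hr' : (0 : ℝ) < r := by exact_mod_cast hr
  have hA0 : ∀ i j, 0 ≤ repMat T i j := fun i j => by
    unfold repMat
    refine Finset.sum_nonneg fun β _ => ?_
    split_ifs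
    · exact hT _ _
    · exact le_rfl
  have hrow : ∀ i, ∃ β, 0 < T i β := by
    intro i
    by_contra! hcon
    have hz : ∀ β, T i β = 0 := fun β => le_antisymm (hcon β) (hT i β)
    have := hAp i i
    obtain ⟨q, rfl⟩ : ∃ q, p = q + 1 := ⟨p - 1, by omega⟩
    rw [pow_succ', Matrix.mul_apply] at this
    simp [repMat, hz] at this
  have htpos : ∀ y : Fin n → ℝ, (∀ i, 0 < y i) → ∀ i, 0 < tapp T y i := by
    intro y hy i
    obtain ⟨β, hβ⟩ := hrow i
    unfold tapp
    exact Finset.sum_pos' (fun γ _ => mul_nonneg (hT _ _) (Finset.prod_nonneg fun l _ => (hy _).le))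
      ⟨β, Finset.mem_univ _, mul_pos hβ (Finset.prod_pos fun l _ => hy _)⟩
  have hlam : 0 < lam := by
    have h := htpos xs hxs ⟨0, hn⟩
    rw [heig] at h
    exact pos_of_mul_pos_left h (pow_pos (hxs _) _).le
  have hSpos : ∀ y : Fin n → ℝ, (∀ i, 0 < y i) → 0 < ∑ j, (tapp T y j) ^ ((r : ℝ)⁻¹) :=
    fun y hy => Finset.sum_pos (fun j _ => Real.rpow_pos_of_pos (htpos y hy j) _)
      Finset.univ_nonempty
  have hxpos : ∀ k i, 0 < x k i := by
    intro k
    induction k with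
    | zero => exact hx0
    | succ k ih =>
      intro i
      rw [hiter]
      exact div_pos (Real.rpow_pos_of_pos (htpos _ ih i) _) (hSpos _ ih)
  have hxsum : ∀ k, ∑ i, x k i = 1 := by
    intro k
    cases k with
    | zero => exact hx0sum
    | succ k =>
      rw [hiter]
      rw [← Finset.sum_div]
      exact div_self (hSpos _ (hxpos k)).ne'
  set pr : Fin n → (Fin r → Fin n) → ℝ := fun i β =>
    T i β * ((∏ l, xs (β l)) / (lam * xs i ^ r)) with hpr
  have hden : ∀ i, 0 < lam * xs i ^ r := fun i => mul_pos hlam (pow_pos (hxs i) _)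
  have hfac : ∀ i (β : Fin r → Fin n), 0 < (∏ l, xs (β l)) / (lam * xs i ^ r) := fun i β =>
    div_pos (Finset.prod_pos fun l _ => hxs _) (hden i)
  have hpr0 : ∀ i β, 0 ≤ pr i β := fun i β => mul_nonneg (hT i β) (hfac i β).le
  have hpr1 : ∀ i, ∑ β, pr i β = 1 := by
    intro i
    have h := heig i
    unfold tapp at h
    simp only [hpr, ← mul_div_assoc]
    rw [← Finset.sum_div, h]
    exact div_self (hden i).ne'
  set P : Matrix (Fin n) (Fin n) ℝ := fun i j =>
    (r : ℝ)⁻¹ * ∑ β, pr i β * ∑ l, if β l = j then (1 : ℝ) else 0 with hP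
  have hind : ∀ (β : Fin r → Fin n) (j : Fin n), 0 ≤ ∑ l, if β l = j then (1 : ℝ) else 0 := by
    intro β j
    refine Finset.sum_nonneg fun l _ => ?_
    split_ifs <;> norm_num
  have hP0 : ∀ i j, 0 ≤ P i j := fun i j =>
    mul_nonneg (by positivity) (Finset.sum_nonneg fun β _ => mul_nonneg (hpr0 i β) (hind β j))
  have hP1 : ∀ i, ∑ j, P i j = 1 := by
    intro i
    simp only [hP]
    rw [← Finset.mul_sum, Finset.sum_comm]
    have : ∀ β : Fin r → Fin n, ∑ j, pr i β * (∑ l, if β l = j then (1 : ℝ) else 0)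
        = pr i β * r := by
      intro β
      rw [← Finset.mul_sum, Finset.sum_comm]
      simp
    simp_rw [this]
    rw [← Finset.sum_mul, hpr1, one_mul, inv_mul_cancel₀ hr'.ne']
  obtain ⟨c0, hc0, hc0le⟩ : ∃ c0 : ℝ, 0 < c0 ∧ ∀ i (β : Fin r → Fin n),
      c0 ≤ (∏ l, xs (β l)) / (lam * xs i ^ r) := by
    have hne2 : Nonempty (Fin n × (Fin r → Fin n)) := inferInstance
    obtain ⟨a, ha⟩ := Finite.exists_min
      (fun z : Fin n × (Fin r → Fin n) => (∏ l, xs (z.2 l)) / (lam * xs z.1 ^ r))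
    exact ⟨_, hfac a.1 a.2, fun i β => ha (i, β)⟩
  have hcA : ∀ i j, ((r : ℝ)⁻¹ * c0) * repMat T i j ≤ P i j := by
    intro i j
    simp only [hP]
    rw [mul_assoc]
    refine mul_le_mul_of_nonneg_left ?_ (by positivity)
    unfold repMat
    rw [Finset.mul_sum]
    refine Finset.sum_le_sum fun β _ => ?_
    split_ifs with h
    · obtain ⟨l0, hl0⟩ := h
      have h1 : (1 : ℝ) ≤ ∑ l, if β l = j then (1 : ℝ) else 0 := by
        have := Finset.single_le_sum (f := fun l => if β l = j then (1 : ℝ) else 0)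
          (fun l _ => by split_ifs <;> norm_num) (Finset.mem_univ l0)
        simpa [hl0] using this
      calc c0 * T i β ≤ pr i β := by
            simp only [hpr]; rw [mul_comm]
            exact mul_le_mul_of_nonneg_left (hc0le i β) (hT i β)
        _ ≤ _ := le_mul_of_one_le_right (hpr0 i β) h1
    · rw [mul_zero]
      exact mul_nonneg (hpr0 i β) (hind β j)
  have hPp : ∀ i j, 0 < (P ^ p) i j := fun i j =>
    lt_of_lt_of_le (mul_pos (pow_pos (by positivity) p) (hAp i j))
      (aux_pow_le (repMat T) P ((r : ℝ)⁻¹ * c0) (by positivity) hA0 hcA p i j).2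
  obtain ⟨ε, hε0, hε1, hε⟩ : ∃ ε : ℝ, 0 < ε ∧ ε < 1 ∧ ∀ i j, ε ≤ (P ^ p) i j := by
    obtain ⟨a, ha⟩ := Finite.exists_min (fun z : Fin n × Fin n => (P ^ p) z.1 z.2)
    refine ⟨min ((P ^ p) a.1 a.2) (1 / 2), lt_min (hPp _ _) (by norm_num),
      lt_of_le_of_lt (min_le_right _ _) (by norm_num),
      fun i j => (min_le_left _ _).trans (ha (i, j))⟩
  set w : ℕ → Fin n → ℝ := fun k i => Real.log (x k i / xs i) with hw
  have hxw : ∀ k i, x k i = xs i * Real.exp (w k i) := by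
    intro k i
    simp only [hw]
    rw [Real.exp_log (div_pos (hxpos k i) (hxs i)), mul_div_cancel₀ _ (hxs i).ne']
  set c : ℕ → ℝ := fun k => (r : ℝ)⁻¹ * Real.log lam -
    Real.log (∑ j, (tapp T (x k) j) ^ ((r : ℝ)⁻¹)) with hcdef
  have htap : ∀ k i, tapp T (x k) i =
      lam * xs i ^ r * ∑ β, pr i β * Real.exp (∑ l, w k (β l)) := by
    intro k i
    unfold tapp
    rw [Finset.mul_sum]
    refine Finset.sum_congr rfl fun β _ => ?_
    simp_rw [hxw k]
    rw [Finset.prod_mul_distrib, Real.exp_sum]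
    simp only [hpr]
    have h1 := hlam.ne'
    have h2 := (hxs i).ne'
    field_simp
  have hstep : ∀ k i, w (k + 1) i =
      (r : ℝ)⁻¹ * Real.log (∑ β, pr i β * Real.exp (∑ l, w k (β l))) + c k := by
    intro k i
    have hpos := (aux_step hr (pr i) (hpr0 i) (hpr1 i) (w k)).2.1
    have e : w (k + 1) i = Real.log (x (k + 1) i) - Real.log (xs i) :=
      Real.log_div (hxpos _ _).ne' (hxs i).ne'
    rw [e, hiter]
    simp only
    rw [Real.log_div (Real.rpow_pos_of_pos (htpos _ (hxpos k) i) _).ne' (hSpos _ (hxpos k)).ne',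
      Real.log_rpow (htpos _ (hxpos k) i), htap k i, Real.log_mul (hden i).ne' hpos.ne',
      Real.log_mul hlam.ne' (pow_pos (hxs i) _).ne', Real.log_pow]
    simp only [hcdef]
    field_simp
    simp_rw [htap]
    ring
  have hlow : ∀ k i, (∑ j, P i j * w k j) + c k ≤ w (k + 1) i := by
    intro k i
    rw [hstep]
    have := (aux_step hr (pr i) (hpr0 i) (hpr1 i) (w k)).1
    simp only [hP]
    linarith
  have hup : ∀ k B, (∀ j, w k j ≤ B) → ∀ i, w (k + 1) i ≤ B + c k := by
    intro k B hB i
    rw [hstep]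
    have := (aux_step hr (pr i) (hpr0 i) (hpr1 i) (w k)).2.2 B hB
    linarith
  set D : ℕ → ℝ := fun k => hilbertD hn (x k) xs with hDdef
  have hD : ∀ k i j, w k i - w k j ≤ D k := fun k => (aux_hilbert hn (x k) xs (hxpos k) hxs).1
  have hD' : ∀ k, ∃ i j, D k = w k i - w k j :=
    fun k => (aux_hilbert hn (x k) xs (hxpos k) hxs).2
  have hDn : ∀ k, 0 ≤ D k := fun k => by have := hD k ⟨0, hn⟩ ⟨0, hn⟩; linarith
  have hcon : ∀ k, D (k + p) ≤ (1 - ε) * D k :=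
    aux_contract2 P hP0 hP1 w c hlow hup D hD hD' p ε hε
  have hmono : ∀ k, D (k + 1) ≤ D k := by
    intro k
    have := aux_contract2 P hP0 hP1 w c hlow hup D hD hD' 1 0 (by simpa using hP0) k
    simpa using this
  have hrate := aux_rate D (hDn 0) (1 - ε) (by linarith) (by linarith) p hp hmono hcon
  refine ⟨?_, 1 - ε, ⟨by linarith, by linarith⟩, p, hp, hrate⟩
  have hp' : (0 : ℝ) < p := by exact_mod_cast hp
  have hDlim : Filter.Tendsto D Filter.atTop (nhds 0) := by
    refine squeeze_zero hDn hrate ?_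
    have h1 : Filter.Tendsto (fun k : ℕ => (1 - ε) ^ ((k : ℝ) / (p : ℝ))) Filter.atTop (nhds 0) :=
      (tendsto_rpow_atTop_of_base_lt_one (1 - ε) (by linarith) (by linarith)).comp
        (tendsto_natCast_atTop_atTop.atTop_div_const hp')
    simpa using (h1.mul_const (D 0)).div_const (1 - ε)
  have hwb : ∀ k i, |w k i| ≤ D k := by
    intro k i
    have hs : ∑ i, x k i = ∑ i, xs i := by rw [hxsum, hsum]
    rw [abs_le]
    constructor
    · by_contra! hcon2
      have hneg : ∀ j, w k j < 0 := fun j => by have := hD k j i; linarith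
      have : ∑ i, x k i < ∑ i, xs i := by
        refine Finset.sum_lt_sum_of_nonempty Finset.univ_nonempty fun j _ => ?_
        rw [hxw k j]
        exact mul_lt_of_lt_one_right (hxs j) (Real.exp_lt_one_iff.2 (hneg j))
      linarith
    · by_contra! hcon2
      have hpos : ∀ j, 0 < w k j := fun j => by have := hD k i j; linarith
      have : ∑ i, xs i < ∑ i, x k i := by
        refine Finset.sum_lt_sum_of_nonempty Finset.univ_nonempty fun j _ => ?_
        rw [hxw k j]
        exact lt_mul_of_one_lt_right (hxs j) (Real.one_lt_exp_iff.2 (hpos j))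
      linarith
  rw [tendsto_pi_nhds]
  intro i
  have hwlim : Filter.Tendsto (fun k => w k i) Filter.atTop (nhds 0) :=
    squeeze_zero_norm (fun k => by simpa using hwb k i) hDlim
  have h2 : Filter.Tendsto (fun k => xs i * Real.exp (w k i)) Filter.atTop
      (nhds (xs i * Real.exp 0)) :=
    ((Real.continuous_exp.tendsto 0).comp hwlim).const_mul (xs i)
  rw [Real.exp_zero, mul_one] at h2
  exact h2.congr fun k => (hxw k i).symm

theorem power_method_global_R_linear_convergence
    (m n : ℕ) (hm : 2 ≤ m) (hn : 2 ≤ n)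
    (T : Fin n → (Fin (m - 1) → Fin n) → ℝ) (hT : TNonneg T)
    (hwp : MatPrimitive (repMat T))
    (lam : ℝ) (xs : Fin n → ℝ) (hxs : ∀ i, 0 < xs i)
    (heig : ∀ i, tapp T xs i = lam * xs i ^ (m - 1))
    (hsum : ∑ i, xs i = 1)
    (x : ℕ → Fin n → ℝ) (hx0 : ∀ i, 0 < x 0 i) (hx0sum : ∑ i, x 0 i = 1)
    (hiter : ∀ k, x (k + 1) = fun i =>
      (tapp T (x k) i) ^ (((m : ℝ) - 1)⁻¹) /
        ∑ j, (tapp T (x k) j) ^ (((m : ℝ) - 1)⁻¹)) :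
    Filter.Tendsto x Filter.atTop (nhds xs) ∧
    ∃ θ : ℝ, θ ∈ Set.Ioo (0 : ℝ) 1 ∧ ∃ M : ℕ, 0 < M ∧
      ∀ k : ℕ, 1 ≤ k →
        hilbertD (show 0 < n by omega) (x k) xs ≤
          θ ^ ((k : ℝ) / (M : ℝ)) * hilbertD (show 0 < n by omega) (x 0) xs / θ := by
  have hcast : ((m : ℝ) - 1) = ((m - 1 : ℕ) : ℝ) := by
    rw [Nat.cast_sub (by omega)]; simp
  simp only [hcast] at hiter
  obtain ⟨h1, θ, hθ, M, hM, h2⟩ := aux_main (m - 1) n (by omega) (by omega) T hT hwp lam xs hxs heig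
    hsum x hx0 hx0sum hiter
  exact ⟨h1, θ, hθ, M, hM, fun k _ => h2 k⟩
end
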